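/- Every r-smooth word is a prefix of some infinite smooth word: for all v ∈ C_r^∞ there exists x ∈ C^∞ with v a prefix of x. -/

import Mathlib

/-!
The derivative `Dr` strictly shortens nonempty words, so an r-smooth word `v` can be extended by
induction on its length. If `v` is empty, any infinite smooth word will do, and one exists: the
fixed point of the primitive starting with `b` (`exists_smooth`). Otherwise `Dr v` is r-smooth and
shorter, hence a prefix of a smooth word `y`. The primitive `c^{y 0} c̄^{y 1} c^{y 2} ⋯` of `y`,
where `c` is the first letter of `v`, is then smooth, and it has `v` as a prefix
(`prefixOf_prim`): all the runs of `v` but the last are prescribed by `Dr v`, and the cutting rule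
makes the last run fit in the corresponding block. No compactness argument is needed.
-/

namespace SmoothWords

/-- Complement of a letter over the alphabet `{a, b}`. -/
def flip (a b c : ℕ) : ℕ := if c = a then b else a

/-- Run-length encoding of a finite word: list of (letter, exponent) pairs. -/
def runs : List ℕ → List (ℕ × ℕ)
  | [] => []
  | c :: t =>
    match runs t with
    | [] => [(c, 1)]
    | (d, k) :: r => if c = d then (c, k + 1) :: r else (c, 1) :: (d, k) :: r

/-- The exponents of the canonical run-length factorization. -/
def exps (u : List ℕ) : List ℕ := (runs u).map Prod.snd

/-- Boundary cut used by the finite derivatives. -/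
def cut (a b p : ℕ) : List ℕ := if p ≤ a then [] else [b]

/-- The finite derivative `D_f`. -/
def Df (a b : ℕ) (u : List ℕ) : List ℕ :=
  match exps u with
  | [] => []
  | [p] => cut a b p
  | p :: q :: rest =>
      cut a b p ++ (q :: rest).dropLast ++ cut a b ((q :: rest).getLast (List.cons_ne_nil _ _))

/-- `u` is f-derivable: letters in `{a,b}`, inner run exponents in `{a,b}`,
boundary run exponents in `[1, b]`. -/
def Cf1 (a b : ℕ) (u : List ℕ) : Prop :=
  (∀ c ∈ u, c = a ∨ c = b) ∧
  (∀ p ∈ exps u, p ≤ b) ∧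
  (∀ p ∈ ((exps u).drop 1).dropLast, p = a ∨ p = b)

/-- `u` is f-smooth: all iterated finite derivatives are f-derivable
(equivalently, some iterate is `ε`). -/
def FSmooth (a b : ℕ) (u : List ℕ) : Prop := ∀ n, Cf1 a b ((Df a b)^[n] u)

/-- The r-derivative `D_r`: keeps all exponents but cuts the last one. -/
def Dr (a b : ℕ) (u : List ℕ) : List ℕ :=
  match exps u with
  | [] => []
  | p :: rest =>
      (p :: rest).dropLast ++ cut a b ((p :: rest).getLast (List.cons_ne_nil _ _))

/-- `u` is r-derivable. -/
def Cr1 (a b : ℕ) (u : List ℕ) : Prop :=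
  (∀ c ∈ u, c = a ∨ c = b) ∧
  (∀ p ∈ exps u, p ≤ b) ∧
  (∀ p ∈ (exps u).dropLast, p = a ∨ p = b)

/-- `u` is r-smooth. -/
def RSmooth (a b : ℕ) (u : List ℕ) : Prop := ∀ n, Cr1 a b ((Dr a b)^[n] u)

/-- `y` is the derivative of the infinite word `x`: `x = x₀^{y₀} x̄₀^{y₁} x₀^{y₂} ⋯`
with all `y i ∈ {a, b}` (in particular `x` is derivable). -/
def DerivesTo (a b : ℕ) (x y : ℕ → ℕ) : Prop :=
  (∀ i, y i = a ∨ y i = b) ∧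
  ∃ S : ℕ → ℕ, S 0 = 0 ∧ (∀ k, S (k + 1) = S k + y k) ∧
    ∀ k i, S k ≤ i → i < S (k + 1) → x i = (flip a b)^[k] (x 0)

/-- An infinite word over `{a,b}` is smooth if it is infinitely derivable. -/
def Smooth (a b : ℕ) (x : ℕ → ℕ) : Prop :=
  (∀ i, x i = a ∨ x i = b) ∧
  ∃ X : ℕ → ℕ → ℕ, X 0 = x ∧ ∀ n, DerivesTo a b (X n) (X (n + 1))

/-- Auxiliary for the f-primitives: alternate blocks with given exponents,
ending with a block of exponent `a`. -/
def pfAux (a b : ℕ) : ℕ → List ℕ → List ℕ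
  | c, [] => List.replicate a c
  | c, p :: t => List.replicate p c ++ pfAux a b (flip a b c) t

/-- The f-primitive `P_{f,c}`. -/
def Pf (a b c : ℕ) (u : List ℕ) : List ℕ :=
  if c = a then List.replicate a a ++ pfAux a b b u
  else (List.replicate a a ++ pfAux a b b u).map (flip a b)

/-- `u` is a bispecial f-smooth word. -/
def Bispecial (a b : ℕ) (u : List ℕ) : Prop :=
  FSmooth a b u ∧ FSmooth a b (a :: u) ∧ FSmooth a b (b :: u) ∧
    FSmooth a b (u ++ [a]) ∧ FSmooth a b (u ++ [b])

open Classical in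
/-- The multiplicity `m(u) = |{aua,aub,bua,bub} ∩ C_f^∞| - 3`. -/
noncomputable def mult (a b : ℕ) (u : List ℕ) : ℤ :=
  (if FSmooth a b (a :: u ++ [a]) then 1 else 0) +
  (if FSmooth a b (a :: u ++ [b]) then 1 else 0) +
  (if FSmooth a b (b :: u ++ [a]) then 1 else 0) +
  (if FSmooth a b (b :: u ++ [b]) then 1 else 0) - 3

/-- The vertex of the tree `T` indexed by the path `s` from the root `ε`
(`false` = child by `P_{f,a}`, `true` = child by `P_{f,b}`). -/
def node (a b : ℕ) : List Bool → List ℕ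
  | [] => []
  | c :: s => Pf a b (if c then b else a) (node a b s)

/-- Total length `f(i) = ∑_{u ∈ T_i} |u|` of generation `i` of `T`. -/
def totalLen (a b i : ℕ) : ℕ :=
  ∑ s : Fin i → Bool, (node a b (List.ofFn s)).length

/-- Generation `i` of the tree `T`, as a finite set of words. -/
def genSet (a b i : ℕ) : Finset (List ℕ) :=
  (Finset.univ : Finset (Fin i → Bool)).image fun s => node a b (List.ofFn s)

/-- `b_i(n) = |T_i ∩ A^n|`. -/
def bfun (a b i n : ℕ) : ℕ := ((genSet a b i).filter fun u => u.length = n).card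

/-- `s_i(n) = ∑_{m<n} b_i(m)`. -/
def sfun (a b i n : ℕ) : ℕ := ∑ m ∈ Finset.range n, bfun a b i m

/-- `p_i(n) = ∑_{m<n} s_i(m)`. -/
def pfun (a b i n : ℕ) : ℕ := ∑ m ∈ Finset.range n, sfun a b i m

/-- `p(n) = ∑_i p_i(n)`. -/
noncomputable def pTot (a b n : ℕ) : ℝ := ∑' i : ℕ, (pfun a b i n : ℝ)

/-- `l_i`, the minimal length of a word of generation `i` of `T`. -/
noncomputable def li (a b i : ℕ) : ℕ :=
  sInf {m | ∃ s : Fin i → Bool, (node a b (List.ofFn s)).length = m}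

/-- `u` is a factor of the infinite word `x`. -/
def FactorOf (u : List ℕ) (x : ℕ → ℕ) : Prop :=
  ∃ i, u = (List.range u.length).map fun j => x (i + j)

/-! ### Primitives of infinite words -/

/-- The position at which block `k` starts, when consecutive blocks have lengths `y 0, y 1, …`. -/
def blockStart (y : ℕ → ℕ) (k : ℕ) : ℕ := ∑ j ∈ Finset.range k, y j

/-- The index of the block containing position `i` when the blocks have lengths `y 0, y 1, …`.
It is meaningful when every `y k` is positive, so that the blocks cover `ℕ`. -/
noncomputable def blockIdx (y : ℕ → ℕ) (i : ℕ) : ℕ := sInf {k | i < blockStart y (k + 1)}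

/-- The primitive of `y` starting with `c`: the infinite word `c^{y 0} c̄^{y 1} c^{y 2} ⋯`. -/
noncomputable def prim (a b c : ℕ) (y : ℕ → ℕ) (i : ℕ) : ℕ := (flip a b)^[blockIdx y i] c

/-- The finite word `v` is a prefix of the infinite word `x`. -/
def PrefixOf (v : List ℕ) (x : ℕ → ℕ) : Prop := ∀ i (h : i < v.length), v[i] = x i

lemma blockStart_succ (y : ℕ → ℕ) (k : ℕ) : blockStart y (k + 1) = blockStart y k + y k :=
  Finset.sum_range_succ _ _

lemma blockStart_succ' (y : ℕ → ℕ) (k : ℕ) :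
    blockStart y (k + 1) = y 0 + blockStart (fun n => y (n + 1)) k := by
  rw [blockStart, Finset.sum_range_succ', add_comm]
  rfl

lemma blockStart_mono (y : ℕ → ℕ) : Monotone (blockStart y) :=
  monotone_nat_of_le_succ fun k => by rw [blockStart_succ]; omega

lemma le_blockStart {y : ℕ → ℕ} (hy : ∀ i, 1 ≤ y i) (k : ℕ) : k ≤ blockStart y k := by
  induction k with
  | zero => exact Nat.zero_le _
  | succ k ih => rw [blockStart_succ]; have := hy k; omega

lemma blockIdx_eq {y : ℕ → ℕ} {i k : ℕ} (h₁ : blockStart y k ≤ i)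
    (h₂ : i < blockStart y (k + 1)) : blockIdx y i = k := by
  apply le_antisymm
  · exact Nat.sInf_le h₂
  · by_contra! h
    have hm : i < blockStart y (blockIdx y i + 1) :=
      Nat.sInf_mem (s := {k | i < blockStart y (k + 1)}) ⟨k, h₂⟩
    have := blockStart_mono y (show blockIdx y i + 1 ≤ k from h)
    omega

lemma exists_block {y : ℕ → ℕ} (hy : ∀ i, 1 ≤ y i) (i : ℕ) :
    ∃ k, blockStart y k ≤ i ∧ i < blockStart y (k + 1) := by
  induction i with
  | zero => exact ⟨0, le_rfl, le_blockStart hy 1⟩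
  | succ i ih =>
    obtain ⟨k, h₁, h₂⟩ := ih
    by_cases h : i + 1 < blockStart y (k + 1)
    · exact ⟨k, by omega, h⟩
    · refine ⟨k + 1, by omega, ?_⟩
      rw [blockStart_succ]
      have := hy (k + 1)
      omega

lemma prim_eq (a b c : ℕ) {y : ℕ → ℕ} {i k : ℕ} (h₁ : blockStart y k ≤ i)
    (h₂ : i < blockStart y (k + 1)) : prim a b c y i = (flip a b)^[k] c := by
  rw [prim, blockIdx_eq h₁ h₂]

lemma prim_of_lt (a b c : ℕ) {y : ℕ → ℕ} {i : ℕ} (h : i < y 0) : prim a b c y i = c :=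
  prim_eq (k := 0) a b c (Nat.zero_le _) (by simpa [blockStart] using h)

lemma prim_add (a b c : ℕ) {y : ℕ → ℕ} (hy : ∀ i, 1 ≤ y i) (i : ℕ) :
    prim a b c y (y 0 + i) = prim a b (flip a b c) (fun n => y (n + 1)) i := by
  obtain ⟨k, h₁, h₂⟩ := exists_block (y := fun n => y (n + 1)) (fun i => hy _) i
  rw [prim_eq a b _ h₁ h₂, prim_eq (k := k + 1) a b c, Function.iterate_succ_apply]
  · rw [blockStart_succ']; omega
  · rw [blockStart_succ']; omega

/-- The first `m` letters of `y` determine the first `y 0 + ⋯ + y (m - 1)` letters of its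
primitive. -/
lemma prim_congr (a b c : ℕ) {y z : ℕ → ℕ} (hy : ∀ i, 1 ≤ y i) {m : ℕ}
    (h : ∀ j < m, y j = z j) {i : ℕ} (hi : i < blockStart y m) :
    prim a b c y i = prim a b c z i := by
  obtain ⟨k, h₁, h₂⟩ := exists_block hy i
  have hk : k < m := by
    by_contra! hk
    have := blockStart_mono y hk
    omega
  have e : ∀ j ≤ m, blockStart y j = blockStart z j := fun j hj =>
    Finset.sum_congr rfl fun l hl => h l (by have := Finset.mem_range.1 hl; omega)
  rw [prim_eq a b c h₁ h₂, prim_eq a b c (e k hk.le ▸ h₁) (e (k + 1) hk ▸ h₂)]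

lemma prim_letters (a b : ℕ) {c : ℕ} (hc : c = a ∨ c = b) (y : ℕ → ℕ) (i : ℕ) :
    prim a b c y i = a ∨ prim a b c y i = b := by
  have : ∀ k, (flip a b)^[k] c = a ∨ (flip a b)^[k] c = b := by
    intro k
    induction k with
    | zero => exact hc
    | succ k ih =>
      rw [Function.iterate_succ_apply', flip]
      split_ifs <;> simp
  exact this _

lemma derivesTo_prim {a b : ℕ} (ha : 1 ≤ a) (hab : a < b) (c : ℕ) {y : ℕ → ℕ}
    (hy : ∀ i, y i = a ∨ y i = b) : DerivesTo a b (prim a b c y) y := by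
  refine ⟨hy, blockStart y, rfl, blockStart_succ y, fun k i h₁ h₂ => ?_⟩
  have h0 : 0 < y 0 := by have := hy 0; omega
  rw [prim_of_lt a b c h0, prim_eq a b c h₁ h₂]

lemma smooth_prim {a b : ℕ} (ha : 1 ≤ a) (hab : a < b) {c : ℕ} (hc : c = a ∨ c = b)
    {y : ℕ → ℕ} (hy : Smooth a b y) : Smooth a b (prim a b c y) := by
  obtain ⟨hl, X, hX0, hX⟩ := hy
  refine ⟨prim_letters a b hc y, fun n => Nat.casesOn n (prim a b c y) X, rfl, ?_⟩
  rintro (_ | n)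
  · simpa [hX0] using derivesTo_prim ha hab c hl
  · exact hX n

/-! ### A self-derivative smooth word -/

/-- A smooth word exists: the generalized Kolakoski word starting with `b`, which is its own
derivative, is the limit of the iterated primitives of `bbb⋯`. -/
lemma exists_smooth {a b : ℕ} (ha : 1 ≤ a) (hab : a < b) : ∃ x, Smooth a b x := by
  set y : ℕ → ℕ → ℕ := fun n => (prim a b b)^[n] (fun _ => b) with hydef
  have hsucc : ∀ n, y (n + 1) = prim a b b (y n) := fun n =>
    Function.iterate_succ_apply' _ _ _
  have hl : ∀ n i, y n i = a ∨ y n i = b := by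
    rintro (_ | n) i
    · exact Or.inr rfl
    · rw [hsucc]; exact prim_letters a b (Or.inr rfl) _ _
  have hpos : ∀ n i, 1 ≤ y n i := fun n i => by have := hl n i; omega
  have hzero : ∀ n, y n 0 = b := by
    rintro (_ | n)
    · rfl
    · rw [hsucc]; exact prim_of_lt a b b (hpos n 0)
  -- The first block has length `b ≥ 2`, so each primitive gains at least one letter of agreement.
  have hgrow : ∀ z : ℕ → ℕ, z 0 = b → (∀ i, 1 ≤ z i) → ∀ n, n + 2 ≤ blockStart z (n + 1) := by
    intro z h0 hz n
    rw [blockStart_succ', h0]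
    have := le_blockStart (y := fun n => z (n + 1)) (fun i => hz _) n
    omega
  have hstep : ∀ n, ∀ i < n + 1, y n i = y (n + 1) i := by
    intro n
    induction n with
    | zero =>
      intro i hi
      obtain rfl : i = 0 := by omega
      rw [hzero, hzero]
    | succ n ih =>
      intro i hi
      rw [hsucc n, hsucc (n + 1)]
      exact prim_congr a b b (hpos n) ih (lt_of_lt_of_le hi (hgrow _ (hzero n) (hpos n) n))
  have hagree : ∀ i d, y i i = y (i + d) i := by
    intro i d
    induction d with
    | zero => rfl
    | succ d ih => rw [ih]; exact hstep (i + d) i (by omega)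
  set x : ℕ → ℕ := fun i => y i i with hx
  have hxl : ∀ i, x i = a ∨ x i = b := fun i => hl i i
  have hfix : prim a b b x = x := by
    funext i
    have h1 : ∀ j < i + 1, x j = y i j := fun j hj => by
      obtain ⟨d, rfl⟩ := Nat.exists_eq_add_of_le (Nat.lt_succ_iff.1 hj)
      exact hagree j d
    rw [prim_congr a b b (fun j => hpos j j) h1
      (lt_of_lt_of_le (by omega) (hgrow x (hzero 0) (fun j => hpos j j) i)), ← hsucc]
    exact (hagree i 1).symm
  refine ⟨x, hxl, fun _ => x, rfl, fun _ => ?_⟩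
  have := derivesTo_prim ha hab b hxl
  rwa [hfix] at this

/-! ### Runs of finite words and prefixes of primitives -/

/-- Splitting off the first maximal run of a nonempty word. -/
lemma runs_decomp (v : List ℕ) (hv : v ≠ []) : ∃ c p w, v = List.replicate (p + 1) c ++ w ∧
    runs v = (c, p + 1) :: runs w ∧ ∀ d ∈ w.head?, d ≠ c := by
  induction v with
  | nil => exact absurd rfl hv
  | cons c t ih =>
    by_cases ht : t = []
    · subst ht
      exact ⟨c, 0, [], by simp, by simp [runs], by simp⟩
    obtain ⟨d, p, w, h₁, h₂, h₃⟩ := ih ht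
    by_cases hcd : c = d
    · subst hcd
      refine ⟨c, p + 1, w, by rw [h₁]; rfl, by rw [runs, h₂]; simp, h₃⟩
    · refine ⟨c, 0, t, by simp, by rw [runs, h₂]; simp [hcd], ?_⟩
      rw [h₁]
      simpa [List.replicate_succ] using Ne.symm hcd

lemma exps_ne_nil {v : List ℕ} (hv : v ≠ []) : exps v ≠ [] := by
  obtain ⟨c, p, w, -, h, -⟩ := runs_decomp v hv
  simp [exps, h]

lemma Dr_last {a b p : ℕ} {v : List ℕ} (h : exps v = [p]) : Dr a b v = cut a b p := by
  rw [Dr]; split <;> simp_all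

lemma Dr_cons {a b p : ℕ} {v w : List ℕ} (h : exps v = p :: exps w) (hw : w ≠ []) :
    Dr a b v = p :: Dr a b w := by
  have := exps_ne_nil hw
  obtain ⟨q, r, hqr⟩ := List.exists_cons_of_ne_nil this
  rw [Dr, Dr, h, hqr]
  simp

lemma length_Dr_lt {a b : ℕ} (ha : 1 ≤ a) (v : List ℕ) (hv : v ≠ []) :
    (Dr a b v).length < v.length := by
  induction hn : v.length using Nat.strong_induction_on generalizing v with
  | _ n ih =>
  obtain ⟨c, p, w, h₁, h₂, -⟩ := runs_decomp v hv
  have hlen : v.length = p + 1 + w.length := by rw [h₁]; simp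
  have he : exps v = (p + 1) :: exps w := by simp [exps, h₂]
  by_cases hw : w = []
  · subst hw
    rw [Dr_last he, cut]
    split_ifs
    · simp; omega
    · simp; omega
  · rw [Dr_cons he hw, List.length_cons]
    have := ih w.length (by omega) w hw rfl
    omega

/-- If `Dr v` is a prefix of `y`, then `v` is a prefix of the primitive of `y` with the same first
letter as `v`. For the truncated last run of `v`: an exponent at most `a` fits in any block,
and an exponent in `(a, b]` is recorded as a letter `b` of `Dr v`. -/
lemma prefixOf_prim {a b : ℕ} (ha : 1 ≤ a) (hab : a < b) (v : List ℕ) (hv : v ≠ [])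
    (hd : Cr1 a b v) (y : ℕ → ℕ) (hy : ∀ i, y i = a ∨ y i = b)
    (hp : PrefixOf (Dr a b v) y) : PrefixOf v (prim a b (v.head hv) y) := by
  induction hn : v.length using Nat.strong_induction_on generalizing v y with
  | _ n ih =>
  have hpos : ∀ i, 1 ≤ y i := fun i => by have := hy i; omega
  obtain ⟨c, p, w, h₁, h₂, h₃⟩ := runs_decomp v hv
  have he : exps v = (p + 1) :: exps w := by simp [exps, h₂]
  have hlen : v.length = p + 1 + w.length := by rw [h₁]; simp
  have hhead : v.head hv = c := by simp [h₁, List.replicate_succ]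
  obtain ⟨hd₁, hd₂, hd₃⟩ := hd
  rw [hhead]
  rw [he] at hd₂ hd₃
  have hblock : ∀ i (h : i < v.length), i < p + 1 → v[i] = c := by
    intro i h hi
    simp only [h₁]
    rw [List.getElem_append_left (by simpa using hi)]
    simp
  by_cases hw : w = []
  · subst hw
    have hle : p + 1 ≤ y 0 := by
      rw [PrefixOf, Dr_last he, cut] at hp
      have hb : p + 1 ≤ b := hd₂ _ (by simp)
      have h0 := hy 0
      split_ifs at hp with hpa
      · omega
      · have := hp 0 (by simp)
        simp at this
        omega
    intro i hi
    have hi' : i < p + 1 := by simpa [hlen] using hi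
    rw [hblock i hi hi', prim_of_lt a b c (by omega)]
  · have hwe := exps_ne_nil hw
    rw [PrefixOf, Dr_cons he hw] at hp
    have h0 : p + 1 = y 0 := hp 0 (by simp)
    rw [List.dropLast_cons_of_ne_nil hwe] at hd₃
    have hwl : ∀ d ∈ w, d = a ∨ d = b := fun d hd => hd₁ d (by rw [h₁]; simp [hd])
    have hc : c = a ∨ c = b := hd₁ c (by rw [h₁]; simp)
    have hwh : w.head hw = flip a b c := by
      have e1 := h₃ (w.head hw) (by simp [List.head?_eq_some_head hw])
      have e2 := hwl _ (List.head_mem hw)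
      rw [flip]
      split_ifs <;> omega
    have key := ih w.length (by omega) w hw
      ⟨hwl, fun q hq => hd₂ q (by simp [hq]), fun q hq => hd₃ q (by simp [hq])⟩
      (fun n => y (n + 1)) (fun i => hy _)
      (fun i hi => hp (i + 1) (by simpa using hi)) rfl
    rw [hwh] at key
    intro i hi
    by_cases hi' : i < p + 1
    · rw [hblock i hi hi', prim_of_lt a b c (by omega)]
    · obtain ⟨j, rfl⟩ := Nat.exists_eq_add_of_le (not_lt.1 hi')
      have hj : j < w.length := by omega
      have e : v[p + 1 + j] = w[j] := by
        simp only [h₁]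
        rw [List.getElem_append_right (by simp)]
        simp
      rw [e, key j hj, h0, prim_add a b c hpos]

lemma exists_smooth_prefix {a b : ℕ} (ha : 1 ≤ a) (hab : a < b) (v : List ℕ)
    (hv : RSmooth a b v) : ∃ x, Smooth a b x ∧ PrefixOf v x := by
  induction hn : v.length using Nat.strong_induction_on generalizing v with
  | _ n ih =>
  by_cases h : v = []
  · obtain ⟨x, hx⟩ := exists_smooth ha hab
    exact ⟨x, hx, fun i hi => by simp [h] at hi⟩
  · obtain ⟨y, hy, hpy⟩ := ih _ (hn ▸ length_Dr_lt (b := b) ha v h) (Dr a b v)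
      (fun n => hv (n + 1)) rfl
    exact ⟨_, smooth_prim ha hab ((hv 0).1 _ (List.head_mem h)) hy,
      prefixOf_prim ha hab v h (hv 0) y hy.1 hpy⟩

theorem stmt12 (a b : ℕ) (ha : 1 ≤ a) (hab : a < b) (v : List ℕ)
    (hv : RSmooth a b v) :
    ∃ x : ℕ → ℕ, Smooth a b x ∧ v = (List.range v.length).map x := by
  obtain ⟨x, hx, hp⟩ := exists_smooth_prefix ha hab v hv
  refine ⟨x, hx, List.ext_getElem (by simp) fun i h _ => ?_⟩
  simpa using hp i h

end SmoothWords
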